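/- Let W be an FI-module admitting a short exact sequence of FI-modules 0 → V → M_0 → W → 0 in which M_0 is a free FI-module generated in degree ≤ k and V is generated in degree ≤ d. Then W admits a resolution by free FI-modules ⋯ → M_p → M_{p−1} → ⋯ → M_1 → M_0 → W → 0 (an exact sequence of FI-modules) in which M_0 is generated in degree ≤ k and, for every p ≥ 1, M_p is generated in degree ≤ min(k,d) + d − 1 + p. -/

import Mathlib

/-!
The resolution is built by covering kernels with free modules, so the point is to bound the degree
of generators of each kernel. Ordinary generation degree does not pass from a map to its kernel;
the following stronger property does. For a submodule `W` of a free module `A`, call `W` split above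
`N` (`SplitAbove`) if for `|T| > N` and `B ⊆ T` every element of `W_T` without components at the
`Q ⊇ B`, that is, every element of `W_T ∩ Σ_{b ∈ B} A_{T ∖ {b}}`, lies in `Σ_{b ∈ B} W_{T ∖ {b}}`.

* If `W` is generated in degree `≤ d` and `A` in degree `≤ k`, then `W` is split above
  `min k d + d` (`FreeStructure.splitAbove_of_famGenLE`). Only components at `Q` with
  `|Q| ≤ min k d` occur in `W`. One proves the statement for the components above a fixed set `J`,
  by downward induction on `|J|` starting from `|J| = min k d` (`CompFamily.main`). A generator
  of `W_T` with `|T|` large misses some point of `T`, and exchanging that point with `a ∈ B` by a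
  transposition moves an element to `W_{T ∖ {a}}` without changing the components that matter.
  In the induction step, an element with no components above `J ∪ {a}` is first decomposed, by
  `syzygy_step`, into such elements which each miss a point `u ≠ a`.
* If `δ : B → A` is a map of free modules whose image is split above `N`, then `ker δ` is split
  above `N + 1` (`SplitAbove.ker`). This is again `syzygy_step`.
* If `W ⊆ A` is split above `N` and `A` is generated in degree `≤ N`, then `W` is generated in
  degree `≤ N`: for `|T| > N` no element of `A_T` has a component at `T`, so the splitting with
  `B = T` writes `W_T` as the sum of the `W_{T ∖ {b}}` (`SplitAbove.famGenLE`).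

With `N = min k d + d`, the image of `M_1 → M_0` is split above `N`, and `M_1` may be taken
generated in degree `≤ d ≤ N`. Inductively the image of `M_{p+1} → M_p` is split above `N + p`, its
kernel is split above `N + p + 1` and hence generated in degree `≤ N + p + 1`, and `M_{p+2}` may be
taken generated in that degree.
-/

/-- An FI-module: a functor from the category of finite sets (modeled as finite
subsets of `ℤ`) and injections to abelian groups. -/
structure FIModule where
  obj : Finset ℤ → Type
  [grp : ∀ T, AddCommGroup (obj T)]
  map : ∀ {S T : Finset ℤ}, (↥S ↪ ↥T) → (obj S →+ obj T)
  map_id : ∀ T : Finset ℤ, map (Function.Embedding.refl ↥T) = AddMonoidHom.id (obj T)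
  map_comp : ∀ {S T U : Finset ℤ} (f : ↥S ↪ ↥T) (g : ↥T ↪ ↥U),
    map (f.trans g) = (map g).comp (map f)

attribute [instance] FIModule.grp

/-- The embedding of coercions induced by an inclusion of finite sets. -/
def inclEmb {S T : Finset ℤ} (h : S ⊆ T) : ↥S ↪ ↥T :=
  ⟨fun x => ⟨x.1, h x.2⟩, fun a b hab => Subtype.ext (by simpa using congrArg Subtype.val hab)⟩

/-- An FI-module is torsion-free if all induced maps are injective. -/
def FIModule.TorsionFree (M : FIModule) : Prop :=
  ∀ {S T : Finset ℤ} (f : ↥S ↪ ↥T), Function.Injective (M.map f)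

/-- An FI-module is generated in degree ≤ m if every `V_T` is spanned by the images
of the `V_S` with `|S| ≤ m`. -/
def FIModule.GenLE (V : FIModule) (m : ℕ) : Prop :=
  ∀ T : Finset ℤ, ∀ x : V.obj T,
    x ∈ AddSubgroup.closure {y : V.obj T |
      ∃ (S : Finset ℤ) (f : ↥S ↪ ↥T) (v : V.obj S), S.card ≤ m ∧ y = V.map f v}

/-- A sub-FI-module of `M`: a subgroup of each `M_T`, compatible with all induced maps. -/
structure FIModule.Sub (M : FIModule) where
  sub : ∀ T : Finset ℤ, AddSubgroup (M.obj T)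
  map_mem : ∀ {S T : Finset ℤ} (f : ↥S ↪ ↥T) {x : M.obj S}, x ∈ sub S → M.map f x ∈ sub T

/-- A sub-FI-module is generated in degree ≤ d if each `V_T` is spanned by the images
`f_*(V_S)` with `|S| ≤ d`. -/
def FIModule.Sub.GenLE {M : FIModule} (V : M.Sub) (d : ℕ) : Prop :=
  ∀ T : Finset ℤ, V.sub T ≤ AddSubgroup.closure {y : M.obj T |
    ∃ (S : Finset ℤ) (f : ↥S ↪ ↥T) (v : M.obj S), S.card ≤ d ∧ v ∈ V.sub S ∧ y = M.map f v}

/-- A morphism of FI-modules: a natural transformation. -/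
structure FIHom (M N : FIModule) where
  app : ∀ T : Finset ℤ, M.obj T →+ N.obj T
  natural : ∀ {S T : Finset ℤ} (f : ↥S ↪ ↥T),
    (app T).comp (M.map f) = (N.map f).comp (app S)

/-- The image of a subset `S ⊆ T` under an embedding `↥T ↪ ↥T'`, as a finite set. -/
def imgUnder {T T' : Finset ℤ} (f : ↥T ↪ ↥T') {S : Finset ℤ} (hS : S ⊆ T) : Finset ℤ :=
  S.attach.image fun x => ((f ⟨x.1, hS x.2⟩ : ↥T') : ℤ)

/-- A free structure on an FI-module `M`, witnessing that `M` is the free FI-module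
`M(U)` on an FB-module `U` (with `U_S = c S S`): a decomposition of each `M_T` as an
internal direct sum of summands `c T S` indexed by the subsets `S ⊆ T`, such that
every induced map `f_* : M_T → M_{T'}` is injective and carries the summand `c T S`
isomorphically onto the summand `c T' (f(S))`. -/
structure FreeStructure (M : FIModule) where
  c : ∀ T : Finset ℤ, Finset ℤ → AddSubgroup (M.obj T)
  eq_bot_of_not_subset : ∀ (T S : Finset ℤ), ¬ S ⊆ T → c T S = ⊥
  indep : ∀ T : Finset ℤ, iSupIndep (c T)
  total : ∀ T : Finset ℤ, (⨆ S : Finset ℤ, c T S) = ⊤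
  inj : ∀ {S T : Finset ℤ} (f : ↥S ↪ ↥T), Function.Injective (M.map f)
  map_summand : ∀ {T T' : Finset ℤ} (f : ↥T ↪ ↥T') (S : Finset ℤ) (hS : S ⊆ T),
    AddSubgroup.map (M.map f) (c T S) = c T' (imgUnder f hS)

/-- A family of subgroups of the `M_T` (e.g. the levelwise kernel of a morphism of
FI-modules) is generated in degree ≤ m if each `W_T` is spanned by the images
`f_*(W_S)` with `|S| ≤ m`. -/
def FamGenLE (M : FIModule) (W : ∀ T : Finset ℤ, AddSubgroup (M.obj T)) (m : ℕ) : Prop :=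
  ∀ T : Finset ℤ, W T ≤ AddSubgroup.closure {y : M.obj T |
    ∃ (S : Finset ℤ) (f : ↥S ↪ ↥T) (v : M.obj S), S.card ≤ m ∧ v ∈ W S ∧ y = M.map f v}

/-! ### The exchange argument inside a fixed finite set -/

/-- Let `F` be an increasing family of subgroups with images `π(F)`. If a sum `z + y`, with
`z ∈ F(T ∖ {a})` and `y ∈ Σ_{b ∈ B} F(T ∖ {b})`, lies in `ker π`, then `π z = -π y` lies in
`π(F(T ∖ {a})) ∩ L B`, which by hypothesis is generated by the `π(F(T ∖ {a, b}))`. Correcting `z`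
and `y` by a lift reduces to `B`, at the cost of raising the bound on `|T|` by one. -/
theorem syzygy_step {H G : Type*} [AddCommGroup H] [AddCommGroup G] (π : H →+ G)
    (R : Finset ℤ) (F : Finset ℤ → AddSubgroup H)
    (hF : ∀ S T, S ⊆ T → T ⊆ R → F S ≤ F T) (L : Finset ℤ → AddSubgroup G) (N : ℕ)
    (hL : ∀ T ⊆ R, ∀ B : Finset ℤ, ∀ b ∈ B, b ∈ T → (F (T.erase b)).map π ≤ L B)
    (hP : ∀ T ⊆ R, N < T.card → ∀ B ⊆ T,
      (F T).map π ⊓ L B ≤ ⨆ b ∈ B, (F (T.erase b)).map π) :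
    ∀ T ⊆ R, N + 1 < T.card → ∀ A ⊆ T,
      (F T ⊓ π.ker) ⊓ (⨆ a ∈ A, F (T.erase a)) ≤ ⨆ a ∈ A, (F (T.erase a) ⊓ π.ker) := by
  intro T hT hN A
  induction A using Finset.induction_on with
  | empty =>
    intro _ x hx
    simpa using hx.2
  | insert a B haB ih =>
    intro hA x hx
    obtain ⟨hx1, hxA⟩ := AddSubgroup.mem_inf.1 hx
    obtain ⟨hxF, hxK⟩ := AddSubgroup.mem_inf.1 hx1
    have haT : a ∈ T := hA (Finset.mem_insert_self _ _)
    have hBT : B ⊆ T := fun b hb => hA (Finset.mem_insert_of_mem hb)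
    have hBTa : B ⊆ T.erase a := fun b hb =>
      Finset.mem_erase.2 ⟨fun h => haB (h ▸ hb), hBT hb⟩
    have hTa : T.erase a ⊆ R := (Finset.erase_subset _ _).trans hT
    rw [Finset.iSup_insert] at hxA
    replace hxA := AddSubgroup.mem_sup.1 hxA
    obtain ⟨z, hz, y, hy, rfl⟩ := hxA
    have hyL : π y ∈ L B := by
      have : (⨆ b ∈ B, F (T.erase b)).map π ≤ L B := by
        simp only [AddSubgroup.map_iSup]
        exact iSup₂_le fun b hb => hL T hT B b hb (hBT hb)
      exact this (AddSubgroup.mem_map_of_mem _ hy)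
    have hzy : π z = - π y := by
      have : π (z + y) = 0 := hxK
      rw [map_add] at this
      exact eq_neg_of_add_eq_zero_left this
    have hcard : N < (T.erase a).card := by
      rw [Finset.card_erase_of_mem haT]; omega
    have hz2 := hP (T.erase a) hTa hcard B hBTa
      (AddSubgroup.mem_inf.2 ⟨AddSubgroup.mem_map_of_mem _ hz, by rw [hzy]; exact neg_mem hyL⟩)
    simp only [← AddSubgroup.map_iSup] at hz2
    obtain ⟨z', hz', hzz⟩ := hz2
    have hz'F : z' ∈ F (T.erase a) :=
      (iSup₂_le fun b _ => hF _ _ (Finset.erase_subset _ _) hTa :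
        (⨆ b ∈ B, F ((T.erase a).erase b)) ≤ F (T.erase a)) hz'
    have hz'B : z' ∈ ⨆ b ∈ B, F (T.erase b) :=
      (iSup₂_mono fun b _ => hF _ _ (Finset.erase_subset_erase _ (Finset.erase_subset _ _))
        ((Finset.erase_subset _ _).trans hT) :
        (⨆ b ∈ B, F ((T.erase a).erase b)) ≤ _) hz'
    have hd : z - z' ∈ F (T.erase a) ⊓ π.ker :=
      AddSubgroup.mem_inf.2 ⟨sub_mem hz hz'F, by rw [AddMonoidHom.mem_ker, map_sub, hzz, sub_self]⟩
    obtain ⟨hd1, hd2⟩ := AddSubgroup.mem_inf.1 hd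
    have hzz' : z' + y = (z + y) - (z - z') := by abel
    have hr := ih hBT (x := z' + y) (AddSubgroup.mem_inf.2 ⟨AddSubgroup.mem_inf.2
      ⟨by rw [hzz']; exact sub_mem hxF (hF _ _ (Finset.erase_subset a T) hT hd1),
        by rw [hzz']; exact sub_mem hxK hd2⟩, add_mem hz'B hy⟩)
    rw [Finset.iSup_insert]
    have hsplit : z + y = (z - z') + (z' + y) := by abel
    rw [hsplit]
    exact AddSubgroup.add_mem_sup hd hr

/-- The projection of a family `(x_Q)_Q` onto its components at the `Q ⊇ J`. -/
def projAbove {G : Type*} [AddCommGroup G] (J : Finset ℤ) :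
    (Finset ℤ → G) →+ (Finset ℤ → G) where
  toFun x Q := if J ⊆ Q then x Q else 0
  map_zero' := by ext Q; simp
  map_add' x y := by ext Q; by_cases h : J ⊆ Q <;> simp [h]

theorem projAbove_apply {G : Type*} [AddCommGroup G] (J : Finset ℤ) (x : Finset ℤ → G)
    (Q : Finset ℤ) : projAbove J x Q = if J ⊆ Q then x Q else 0 := rfl

theorem projAbove_comp {G : Type*} [AddCommGroup G] (I J : Finset ℤ) (x : Finset ℤ → G) :
    projAbove I (projAbove J x) = projAbove (I ∪ J) x := by
  ext Q
  simp only [projAbove_apply, Finset.union_subset_iff]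
  split_ifs <;> simp_all

theorem projAbove_eq_zero {G : Type*} [AddCommGroup G] {J : Finset ℤ} {x : Finset ℤ → G} :
    projAbove J x = 0 ↔ ∀ Q, J ⊆ Q → x Q = 0 := by
  simp only [funext_iff, projAbove_apply, Pi.zero_apply, ite_eq_right_iff]

/-- The data retained from a submodule of a free FI-module on the subsets of a fixed finite set
`R`: each `V S` is a group of families of components indexed by the finite sets `Q`. `supp` says
that only `Q ⊆ S` with `|Q| ≤ k` occur, `gen` that `V` is generated by the `V X` with `|X| ≤ d`, and
`swap` that a transposition of `R` acts, permuting the components and fixing those at the `Q` it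
fixes pointwise. -/
structure CompFamily (G : Type*) [AddCommGroup G] (R : Finset ℤ) (k d : ℕ) where
  V : Finset ℤ → AddSubgroup (Finset ℤ → G)
  mono : ∀ S T, S ⊆ T → T ⊆ R → V S ≤ V T
  supp : ∀ S ⊆ R, ∀ x ∈ V S, ∀ Q, x Q ≠ 0 → Q ⊆ S ∧ Q.card ≤ k
  gen : ∀ S ⊆ R, V S ≤ ⨆ X ∈ {X : Finset ℤ | X ⊆ S ∧ X.card ≤ d}, V X
  swap : ∀ S ⊆ R, ∀ a ∈ R, ∀ b ∈ R, ∀ x ∈ V S, ∃ x' ∈ V (S.image (Equiv.swap a b)),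
    (∀ Q, a ∉ Q → b ∉ Q → x' Q = x Q) ∧
    (∀ Q : Finset ℤ, x (Q.image (Equiv.swap a b)) = 0 → x' Q = 0)

namespace CompFamily
variable {G : Type*} [AddCommGroup G] {R : Finset ℤ} {k d : ℕ}

theorem image_swap_subset {a b : ℤ} {X Y : Finset ℤ} (h : ∀ x ∈ X, x ≠ a → x ≠ b → x ∈ Y)
    (ha : a ∈ X → b ∈ Y) (hb : b ∈ X → a ∈ Y) : X.image (Equiv.swap a b) ⊆ Y := by
  intro y hy
  obtain ⟨x, hx, rfl⟩ := Finset.mem_image.1 hy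
  by_cases h1 : x = a
  · subst h1; simpa using ha hx
  · by_cases h2 : x = b
    · subst h2; simpa using hb hx
    · rw [Equiv.swap_apply_of_ne_of_ne h1 h2]; exact h x hx h1 h2

/-- Base case: when `|J| = k` only the component at `J` survives above `J`, and it is fixed by
transpositions away from `J`. A generator from `X ∋ a` with `|X| ≤ d` misses a point `y` of `U`, and
exchanging `a` and `y` does not change that component. -/
theorem top_case (C : CompFamily G R k d) (J U : Finset ℤ) (hR : U ∪ J ⊆ R)
    (hJU : Disjoint U J) (hJ : J.card = k) (hU : d < U.card + k) (a : ℤ) (ha : a ∈ U) :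
    (C.V (U ∪ J)).map (projAbove J) ≤ (C.V (U.erase a ∪ J)).map (projAbove J) := by
  have hRa : U.erase a ∪ J ⊆ R :=
    (Finset.union_subset_union_left (Finset.erase_subset _ _)).trans hR
  refine (AddSubgroup.map_mono (C.gen _ hR)).trans ?_
  simp only [AddSubgroup.map_iSup]
  refine iSup₂_le ?_
  rintro X ⟨hXU, hXd⟩ _ ⟨x, hx, rfl⟩
  by_cases hJX : J ⊆ X
  swap
  · refine ⟨0, zero_mem _, ?_⟩
    rw [map_zero, eq_comm, projAbove_eq_zero]
    intro Q hQ
    by_contra hne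
    exact hJX (hQ.trans (C.supp X (hXU.trans hR) x hx Q hne).1)
  by_cases haX : a ∈ X
  swap
  · refine ⟨x, C.mono X _ ?_ hRa hx, rfl⟩
    intro y hy
    have := hXU hy
    have hya : y ≠ a := fun h => haX (h ▸ hy)
    simp only [Finset.mem_union, Finset.mem_erase] at this ⊢
    tauto
  obtain ⟨y, hyU, hyX⟩ : ∃ y ∈ U, y ∉ X := by
    by_contra hcon
    push Not at hcon
    have h1 : U ∪ J ⊆ X := Finset.union_subset hcon hJX
    have h2 := Finset.card_le_card h1
    rw [Finset.card_union_of_disjoint hJU] at h2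
    omega
  have haJ : a ∉ J := fun h => Finset.disjoint_left.1 hJU ha h
  have hyJ : y ∉ J := fun h => Finset.disjoint_left.1 hJU hyU h
  have hya : y ≠ a := fun h => hyX (h ▸ haX)
  have hUR : U ⊆ R := Finset.subset_union_left.trans hR
  obtain ⟨x', hx', hfix, -⟩ := C.swap X (hXU.trans hR) a (hUR ha) y (hUR hyU) x hx
  have hx'' : x' ∈ C.V (U.erase a ∪ J) := by
    refine C.mono _ _ ?_ hRa hx'
    refine image_swap_subset ?_ ?_ ?_
    · intro z hz hza _
      have := hXU hz
      simp only [Finset.mem_union, Finset.mem_erase] at this ⊢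
      tauto
    · intro _; simp [hya, hyU]
    · intro h; exact absurd h hyX
  refine ⟨x', hx'', ?_⟩
  ext Q
  rw [projAbove_apply, projAbove_apply]
  split_ifs with hQ
  swap
  · rfl
  by_cases hQJ : Q = J
  · subst hQJ; exact hfix _ haJ hyJ
  have hc : ¬ Q.card ≤ k := by
    have := Finset.card_lt_card (Finset.ssubset_iff_subset_ne.2 ⟨hQ, fun h => hQJ h.symm⟩)
    omega
  have h1 : x' Q = 0 := by
    by_contra hne; exact hc (C.supp _ hRa _ hx'' Q hne).2
  have h2 : x Q = 0 := by
    by_contra hne; exact hc (C.supp _ (hXU.trans hR) _ hx Q hne).2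
  rw [h1, h2]

/-- An element of `V((U ∖ {u}) ∪ J)` without components at the `Q ⊇ J ∪ {a}` has, above `J`, only
components at sets avoiding `a` and `u`; exchanging `a` and `u` leaves these unchanged and moves the
element to `V((U ∖ {a}) ∪ J)`. -/
theorem exchange (C : CompFamily G R k d) (J U : Finset ℤ) (hR : U ∪ J ⊆ R)
    (hJU : Disjoint U J) (a u : ℤ) (ha : a ∈ U) (hu : u ∈ U) (hau : u ≠ a)
    (x : Finset ℤ → G) (hx : x ∈ C.V (U.erase u ∪ J))
    (h0 : projAbove {a} (projAbove J x) = 0) :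
    projAbove J x ∈ (C.V (U.erase a ∪ J)).map (projAbove J) := by
  have hRa : U.erase a ∪ J ⊆ R :=
    (Finset.union_subset_union_left (Finset.erase_subset _ _)).trans hR
  have hRu : U.erase u ∪ J ⊆ R :=
    (Finset.union_subset_union_left (Finset.erase_subset _ _)).trans hR
  have haJ : a ∉ J := fun h => Finset.disjoint_left.1 hJU ha h
  have huJ : u ∉ J := fun h => Finset.disjoint_left.1 hJU hu h
  have hUR : U ⊆ R := Finset.subset_union_left.trans hR
  rw [projAbove_comp, projAbove_eq_zero] at h0
  obtain ⟨x', hx', hfix, hz⟩ := C.swap _ hRu a (hUR ha) u (hUR hu) x hx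
  have hx'' : x' ∈ C.V (U.erase a ∪ J) := by
    refine C.mono _ _ ?_ hRa hx'
    refine image_swap_subset ?_ ?_ ?_
    · intro z hz hza _
      simp only [Finset.mem_union, Finset.mem_erase] at hz ⊢
      tauto
    · intro _; simp [hau, hu]
    · intro h; simp [huJ] at h
  refine ⟨x', hx'', ?_⟩
  ext Q
  rw [projAbove_apply, projAbove_apply]
  split_ifs with hQ
  swap
  · rfl
  by_cases haQ : a ∈ Q
  · have h1 : x' Q = 0 := by
      by_contra hne
      have := (C.supp _ hRa _ hx'' Q hne).1 haQ
      simp [haJ] at this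
    have h2 : x Q = 0 := h0 Q (Finset.union_subset (by simpa using haQ) hQ)
    rw [h1, h2]
  by_cases huQ : u ∈ Q
  · have h2 : x Q = 0 := by
      by_contra hne
      have := (C.supp _ hRu _ hx Q hne).1 huQ
      simp [huJ] at this
    rw [h2]
    apply hz
    apply h0
    intro z hzz
    rcases Finset.mem_union.1 hzz with h | h
    · rw [Finset.mem_singleton] at h
      subst h
      exact Finset.mem_image.2 ⟨u, huQ, by simp⟩
    · refine Finset.mem_image.2 ⟨z, hQ h, Equiv.swap_apply_of_ne_of_ne ?_ ?_⟩
      · rintro rfl; exact haJ h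
      · rintro rfl; exact huJ h
  · exact hfix Q haQ huQ

/-- The statement of `main` at `J`, supposed to hold at `insert a J`, yields the case `A = {a}`
at `J`: elements of `V(U ∪ J)` without components at the `Q ⊇ J ∪ {a}` come from
`V((U ∖ {a}) ∪ J)` modulo components not above `J`. -/
theorem single (C : CompFamily G R k d) (hkd : k ≤ d) (J U : Finset ℤ) (hR : U ∪ J ⊆ R)
    (hJU : Disjoint U J) (hJ : J.card < k) (hU : k + d < U.card + 2 * J.card)
    (a : ℤ) (ha : a ∈ U)
    (ih : ∀ T, T ∪ insert a J ⊆ R → Disjoint T (insert a J) →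
      k + d < T.card + 2 * (insert a J).card → ∀ B ⊆ T, ∀ x ∈ C.V (T ∪ insert a J),
      projAbove (B ∪ insert a J) x = 0 → projAbove (insert a J) x ∈
        ⨆ b ∈ B, (C.V (T.erase b ∪ insert a J)).map (projAbove (insert a J)))
    (x : Finset ℤ → G) (hx : x ∈ C.V (U ∪ J)) (h0 : projAbove {a} (projAbove J x) = 0) :
    projAbove J x ∈ (C.V (U.erase a ∪ J)).map (projAbove J) := by
  have hUR : U ⊆ R := Finset.subset_union_left.trans hR
  have hJR : J ⊆ R := Finset.subset_union_right.trans hR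
  have haJ : a ∉ J := fun h => Finset.disjoint_left.1 hJU ha h
  have hJ' : (insert a J).card = J.card + 1 := Finset.card_insert_of_notMem haJ
  set F : Finset ℤ → AddSubgroup (Finset ℤ → G) :=
    fun S => (C.V (insert a S ∪ J)).map (projAbove J) with hFdef
  have hsub : ∀ T ⊆ R \ insert a J, insert a T ∪ J ⊆ R := by
    intro T hT
    refine Finset.union_subset (Finset.insert_subset (hUR ha) ?_) hJR
    exact hT.trans Finset.sdiff_subset
  have hpr : ∀ w : Finset ℤ → G,
      projAbove {a} (projAbove J w) = projAbove (insert a J) w := by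
    intro w; rw [projAbove_comp]; rfl
  have hset : ∀ T : Finset ℤ, insert a T ∪ J = T ∪ insert a J := by
    intro T; ext z; simp only [Finset.mem_union, Finset.mem_insert]; tauto
  have hmap : ∀ T : Finset ℤ, (F T).map (projAbove {a}) =
      (C.V (T ∪ insert a J)).map (projAbove (insert a J)) := by
    intro T
    rw [hFdef, ← hset, AddSubgroup.map_map]
    congr 1
    ext1 w; exact hpr w
  have key := syzygy_step (projAbove {a}) (R \ insert a J) F
    (fun S T hST hT => AddSubgroup.map_mono (C.mono _ _
      (Finset.union_subset_union_left (Finset.insert_subset_insert _ hST)) (hsub T hT)))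
    (fun B => (projAbove (G := G) B).ker) (k + d - 2 * (J.card + 1))
    (by
      rintro T hT B b hb hbT _ ⟨_, ⟨w, hw, rfl⟩, rfl⟩
      change projAbove B _ = 0
      rw [hpr, projAbove_comp, projAbove_eq_zero]
      intro Q hQ
      by_contra hne
      have h1 := (C.supp _ (hsub _ ((Finset.erase_subset _ _).trans hT)) w hw Q hne).1
        (hQ (Finset.mem_union_left _ hb))
      have h2 := hT hbT
      simp only [Finset.mem_sdiff, Finset.mem_insert, not_or] at h2
      simp only [Finset.mem_union, Finset.mem_insert, Finset.mem_erase] at h1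
      tauto)
    (by
      intro T hT hN B hB y hy
      obtain ⟨hy1, hy2⟩ := AddSubgroup.mem_inf.1 hy
      rw [hmap] at hy1
      obtain ⟨w, hw, rfl⟩ := hy1
      simp only [hmap]
      refine ih T ?_ ?_ (by rw [hJ']; omega) B hB w hw ?_
      · rw [← hset]; exact hsub T hT
      · exact Finset.disjoint_of_subset_left hT Finset.sdiff_disjoint
      · rw [← projAbove_comp]; exact hy2)
    (U.erase a)
    (by
      intro z hz
      have h1 := Finset.mem_of_mem_erase hz
      have h2 := Finset.disjoint_left.1 hJU h1
      simp only [Finset.mem_sdiff, Finset.mem_insert, not_or]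
      exact ⟨hUR h1, Finset.ne_of_mem_erase hz, h2⟩)
    (by rw [Finset.card_erase_of_mem ha]; omega)
    (U.erase a) subset_rfl
  have hx1 : projAbove J x ∈ F (U.erase a) := by
    refine ⟨x, ?_, rfl⟩
    rw [Finset.insert_erase ha]; exact hx
  -- `F` is generated in degree `≤ d - |J|`, which is less than `|U \ {a}|`
  have hx2 : projAbove J x ∈ ⨆ u ∈ U.erase a, F ((U.erase a).erase u) := by
    suffices h : (C.V (U ∪ J)).map (projAbove J) ≤
        ⨆ u ∈ U.erase a, F ((U.erase a).erase u) from h (AddSubgroup.mem_map_of_mem _ hx)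
    refine (AddSubgroup.map_mono (C.gen _ hR)).trans ?_
    simp only [AddSubgroup.map_iSup]
    refine iSup₂_le ?_
    rintro X ⟨hXU, hXd⟩
    by_cases hJX : J ⊆ X
    swap
    · rintro _ ⟨w, hw, rfl⟩
      have : projAbove J w = 0 := by
        rw [projAbove_eq_zero]
        intro Q hQ
        by_contra hne
        exact hJX (hQ.trans (C.supp X (hXU.trans hR) w hw Q hne).1)
      rw [this]; exact zero_mem _
    obtain ⟨u, hu, huX⟩ : ∃ u ∈ U.erase a, u ∉ X := by
      by_contra hcon
      push Not at hcon
      have h2 := Finset.card_le_card (Finset.union_subset hcon hJX)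
      rw [Finset.card_union_of_disjoint
        (Finset.disjoint_of_subset_left (Finset.erase_subset _ _) hJU),
        Finset.card_erase_of_mem ha] at h2
      omega
    refine le_trans ?_
      (le_iSup₂ (f := fun u (_ : u ∈ U.erase a) => F ((U.erase a).erase u)) u hu)
    refine AddSubgroup.map_mono (C.mono _ _ ?_ ?_)
    · intro z hz
      have := hXU hz
      have hzu : z ≠ u := fun h => huX (h ▸ hz)
      simp only [Finset.mem_union, Finset.mem_insert, Finset.mem_erase] at this ⊢
      tauto
    · refine subset_trans ?_ hR
      refine Finset.union_subset_union_left (Finset.insert_subset ha ?_)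
      exact (Finset.erase_subset _ _).trans (Finset.erase_subset _ _)
  have hfin := key (AddSubgroup.mem_inf.2 ⟨AddSubgroup.mem_inf.2 ⟨hx1, h0⟩, hx2⟩)
  refine (iSup₂_le ?_ : (⨆ u ∈ U.erase a, F ((U.erase a).erase u) ⊓
    (projAbove (G := G) {a}).ker) ≤ _) hfin
  rintro u hu _ ⟨⟨w, hw, rfl⟩, hker⟩
  have hua : u ≠ a := Finset.ne_of_mem_erase hu
  refine C.exchange J U hR hJU a u ha (Finset.mem_of_mem_erase hu) hua w ?_ hker
  have : insert a ((U.erase a).erase u) = U.erase u := by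
    rw [Finset.erase_right_comm, Finset.insert_erase]
    exact Finset.mem_erase.2 ⟨hua.symm, ha⟩
  rw [← this]; exact hw

/-- The elements of `V(U ∪ J)` without components at the `Q ⊇ A ∪ J` come from the
`V((U ∖ {a}) ∪ J)`, `a ∈ A`, modulo components not above `J`. Downward induction on `|J|`; the bound
`k + d` drops by two whenever `J` grows by one point. -/
theorem main (C : CompFamily G R k d) (hkd : k ≤ d) (i : ℕ) :
    ∀ J U : Finset ℤ, U ∪ J ⊆ R → Disjoint U J → J.card + i = k →
      k + d < U.card + 2 * J.card → ∀ A ⊆ U, ∀ x ∈ C.V (U ∪ J), projAbove (A ∪ J) x = 0 →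
      projAbove J x ∈ ⨆ a ∈ A, (C.V (U.erase a ∪ J)).map (projAbove J) := by
  induction i with
  | zero =>
    intro J U hR hJU hJ hU A hA x hx h0
    rcases A.eq_empty_or_nonempty with rfl | ⟨a, ha⟩
    · rw [Finset.empty_union] at h0
      rw [h0]; exact zero_mem _
    · have h1 : J.card = k := by omega
      have h2 : d < U.card + k := by omega
      have h3 := C.top_case J U hR hJU h1 h2 a (hA ha) (AddSubgroup.mem_map_of_mem _ hx)
      have h4 : (C.V (U.erase a ∪ J)).map (projAbove J) ≤
          ⨆ a ∈ A, (C.V (U.erase a ∪ J)).map (projAbove J) :=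
        le_iSup₂ (f := fun a (_ : a ∈ A) => (C.V (U.erase a ∪ J)).map (projAbove J)) a ha
      exact h4 h3
  | succ i ih =>
    intro J U hR hJU hJ hU A
    have hUR : U ⊆ R := Finset.subset_union_left.trans hR
    have hJR : J ⊆ R := Finset.subset_union_right.trans hR
    have single : ∀ a ∈ U, ∀ x ∈ C.V (U ∪ J), projAbove {a} (projAbove J x) = 0 →
        projAbove J x ∈ (C.V (U.erase a ∪ J)).map (projAbove J) := by
      intro a ha
      have haJ : a ∉ J := fun h => Finset.disjoint_left.1 hJU ha h
      exact C.single hkd J U hR hJU (by omega) hU a ha fun T h1 h2 h3 =>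
        ih (insert a J) T h1 h2 (by rw [Finset.card_insert_of_notMem haJ]; omega) h3
    intro hA x hx h0
    rcases A.eq_empty_or_nonempty with rfl | ⟨a, haA⟩
    · rw [Finset.empty_union] at h0
      rw [h0]; exact zero_mem _
    have ha := hA haA
    have haJ : a ∉ J := fun h => Finset.disjoint_left.1 hJU ha h
    have hset : ∀ T : Finset ℤ, insert a T ∪ J = T ∪ insert a J := by
      intro T; ext z; simp only [Finset.mem_union, Finset.mem_insert]; tauto
    have hset2 : ∀ b ∈ A.erase a, (U.erase a).erase b ∪ insert a J = U.erase b ∪ J := by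
      intro b hb
      rw [← hset, Finset.erase_right_comm, Finset.insert_erase]
      exact Finset.mem_erase.2 ⟨(Finset.ne_of_mem_erase hb).symm, ha⟩
    have hUa : U.erase a ∪ insert a J = U ∪ J := by
      rw [← hset, Finset.insert_erase ha]
    have h1 := ih (insert a J) (U.erase a) (by rw [hUa]; exact hR)
      (by
        rw [Finset.disjoint_left]
        intro z hz hz'
        rcases Finset.mem_insert.1 hz' with rfl | h
        · simp at hz
        · exact Finset.disjoint_left.1 hJU (Finset.mem_of_mem_erase hz) h)
      (by rw [Finset.card_insert_of_notMem haJ]; omega)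
      (by rw [Finset.card_insert_of_notMem haJ, Finset.card_erase_of_mem ha]; omega)
      (A.erase a) (Finset.erase_subset_erase _ hA) x (by rw [hUa]; exact hx)
      (by
        rw [← hset, Finset.insert_erase haA]; exact h0)
    have hpr : (projAbove (G := G) (insert a J)) = (projAbove {a}).comp (projAbove J) := by
      ext1 w; exact (projAbove_comp {a} J w).symm
    have h2 : projAbove (insert a J) x ∈
        (⨆ b ∈ A.erase a, (C.V (U.erase b ∪ J))).map (projAbove (insert a J)) := by
      simp only [AddSubgroup.map_iSup]
      have hle : (⨆ b ∈ A.erase a, (C.V ((U.erase a).erase b ∪ insert a J)).map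
          (projAbove (insert a J))) ≤
          ⨆ b ∈ A.erase a, (C.V (U.erase b ∪ J)).map (projAbove (insert a J)) :=
        iSup₂_mono fun b hb => by rw [hset2 b hb]
      exact hle h1
    obtain ⟨y, hy, hyx⟩ := h2
    have hyV : y ∈ C.V (U ∪ J) := by
      refine (iSup₂_le fun b _ => C.mono _ _ ?_ hR :
        (⨆ b ∈ A.erase a, (C.V (U.erase b ∪ J))) ≤ _) hy
      exact Finset.union_subset_union_left (Finset.erase_subset _ _)
    have h3 := single a ha (x - y) (sub_mem hx hyV) (by
      have : projAbove {a} (projAbove J (x - y)) = projAbove (insert a J) (x - y) := by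
        rw [hpr]; rfl
      rw [this, map_sub, hyx, sub_self])
    have h4 : projAbove J y ∈ ⨆ b ∈ A.erase a, (C.V (U.erase b ∪ J)).map (projAbove J) := by
      simp only [← AddSubgroup.map_iSup]
      exact AddSubgroup.mem_map_of_mem _ hy
    have h5 : projAbove J x = projAbove J (x - y) + projAbove J y := by
      rw [← map_add, sub_add_cancel]
    rw [h5]
    have hle : ∀ b ∈ A, (C.V (U.erase b ∪ J)).map (projAbove J) ≤
        ⨆ a ∈ A, (C.V (U.erase a ∪ J)).map (projAbove J) := fun b hb =>
      le_iSup₂ (f := fun a (_ : a ∈ A) => (C.V (U.erase a ∪ J)).map (projAbove J)) b hb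
    have hle2 : (⨆ b ∈ A.erase a, (C.V (U.erase b ∪ J)).map (projAbove J)) ≤
        ⨆ a ∈ A, (C.V (U.erase a ∪ J)).map (projAbove J) :=
      iSup₂_le fun b hb => hle b (Finset.mem_of_mem_erase hb)
    exact add_mem (hle a haA h3) (hle2 h4)

/-- For `|T| > k + d`, the elements of `V T` without components at the `Q ⊇ A` lie in
`Σ_{a ∈ A} V(T ∖ {a})`. -/
theorem inter_le (C : CompFamily G R k d) (hkd : k ≤ d) (T : Finset ℤ) (hT : T ⊆ R)
    (hc : k + d < T.card) (A : Finset ℤ) (hA : A ⊆ T) (x : Finset ℤ → G) (hx : x ∈ C.V T)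
    (h0 : ∀ Q, A ⊆ Q → x Q = 0) : x ∈ ⨆ a ∈ A, C.V (T.erase a) := by
  have h := C.main hkd k ∅ T (by simpa using hT) (by simp) (by simp) (by simpa using hc) A hA x
    (by simpa using hx) (by rw [Finset.union_empty, projAbove_eq_zero]; exact h0)
  have hid : projAbove (G := G) ∅ = AddMonoidHom.id _ := by
    ext1 w; ext Q; simp [projAbove_apply]
  simpa [hid] using h

end CompFamily

/-! ### Components in free FI-modules -/

theorem exists_components {G : Type*} [AddCommGroup G] (c : Finset ℤ → AddSubgroup G)
    (hi : iSupIndep c) (ht : (⨆ Q, c Q) = ⊤) : ∃ e : G →+ (Finset ℤ → G),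
      (∀ x Q, e x Q ∈ c Q) ∧ (∀ Q, ∀ x ∈ c Q, e x = Pi.single Q x) ∧
      (∀ (P : Finset ℤ → Prop) x, (∀ Q, ¬ P Q → e x Q = 0) → x ∈ ⨆ Q, ⨆ _ : P Q, c Q) := by
  classical
  have hbij : Function.Bijective (DirectSum.coeAddMonoidHom c) := by
    refine ⟨hi.dfinsuppSumAddHom_injective, ?_⟩
    rw [← AddMonoidHom.range_eq_top, eq_top_iff, ← ht]
    exact iSup_le fun Q x hx => ⟨DirectSum.of (fun i => c i) Q ⟨x, hx⟩,
      DirectSum.coeAddMonoidHom_of c Q ⟨x, hx⟩⟩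
  let E := AddEquiv.ofBijective _ hbij
  refine ⟨AddMonoidHom.mk' (fun x Q => ((E.symm x) Q : G)) ?_, ?_, ?_, ?_⟩
  · intro x y; ext Q; simp
  · intro x Q; exact ((E.symm x) Q).2
  · intro Q x hx
    have : E.symm x = DirectSum.of (fun i => c i) Q ⟨x, hx⟩ := by
      rw [AddEquiv.symm_apply_eq]
      exact (DirectSum.coeAddMonoidHom_of c Q ⟨x, hx⟩).symm
    ext Q'
    change ((E.symm x) Q' : G) = _
    rw [this]
    by_cases h : Q = Q'
    · subst h; rw [DirectSum.of_eq_same, Pi.single_eq_same]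
    · rw [DirectSum.of_eq_of_ne _ _ _ (Ne.symm h), Pi.single_eq_of_ne (Ne.symm h)]; rfl
  · intro P x hx
    have h1 : x = E (E.symm x) := by simp
    have h2 : E (E.symm x) = DFinsupp.sum (E.symm x) fun i => (fun x : c i => (x : G)) :=
      DirectSum.coeAddMonoidHom_eq_dfinsuppSum c (E.symm x)
    rw [h1, h2]
    refine sum_mem fun Q hQ => ?_
    by_cases hP : P Q
    · exact AddSubgroup.mem_iSup_of_mem Q (AddSubgroup.mem_iSup_of_mem hP (SetLike.coe_mem _))
    · have h3 : ((E.symm x) Q : G) = 0 := hx Q hP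
      change ((E.symm x) Q : G) ∈ _
      rw [h3]; exact zero_mem _

theorem mem_imgUnder {T T' : Finset ℤ} (f : ↥T ↪ ↥T') {S : Finset ℤ} (hS : S ⊆ T) {z : ℤ} :
    z ∈ imgUnder f hS ↔ ∃ x, ∃ h : x ∈ S, (f ⟨x, hS h⟩ : ℤ) = z := by
  simp [imgUnder]

theorem imgUnder_injective {T T' : Finset ℤ} (f : ↥T ↪ ↥T') {S S' : Finset ℤ} (hS : S ⊆ T)
    (hS' : S' ⊆ T) (h : imgUnder f hS = imgUnder f hS') : S = S' := by
  have aux : ∀ {S S' : Finset ℤ} (hS : S ⊆ T) (hS' : S' ⊆ T),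
      imgUnder f hS = imgUnder f hS' → S ⊆ S' := by
    intro S S' hS hS' h x hx
    have h1 : (f ⟨x, hS hx⟩ : ℤ) ∈ imgUnder f hS' := by
      rw [← h]; exact (mem_imgUnder f hS).2 ⟨x, hx, rfl⟩
    obtain ⟨y, hy, hxy⟩ := (mem_imgUnder f hS').1 h1
    have h2 := congrArg Subtype.val (f.injective (Subtype.ext hxy))
    exact (show y = x from h2) ▸ hy
  exact subset_antisymm (aux hS hS' h) (aux hS' hS h.symm)

theorem imgUnder_card {T T' : Finset ℤ} (f : ↥T ↪ ↥T') {S : Finset ℤ} (hS : S ⊆ T) :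
    (imgUnder f hS).card = S.card := by
  rw [imgUnder, Finset.card_image_of_injective, Finset.card_attach]
  intro x y h
  have h2 := congrArg Subtype.val (f.injective (Subtype.ext h))
  exact Subtype.ext h2

theorem imgUnder_subset {T T' : Finset ℤ} (f : ↥T ↪ ↥T') {S : Finset ℤ} (hS : S ⊆ T) :
    imgUnder f hS ⊆ T' := by
  intro z hz
  obtain ⟨x, hx, rfl⟩ := (mem_imgUnder f hS).1 hz
  exact (f _).2

theorem imgUnder_inclEmb {T T' : Finset ℤ} (h : T ⊆ T') {S : Finset ℤ} (hS : S ⊆ T) :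
    imgUnder (inclEmb h) hS = S := by
  ext z; rw [mem_imgUnder]
  exact ⟨fun ⟨x, hx, h⟩ => (show x = z from h) ▸ hx, fun h => ⟨z, h, rfl⟩⟩

/-- An injection factors through its image. -/
theorem exists_factor {S T : Finset ℤ} (f : ↥S ↪ ↥T) (X : Finset ℤ) (hX : X ⊆ T)
    (h : imgUnder f (subset_refl S) ⊆ X) : ∃ g : ↥S ↪ ↥X, f = g.trans (inclEmb hX) := by
  refine ⟨⟨fun x => ⟨f x, h ((mem_imgUnder f _).2 ⟨x.1, x.2, rfl⟩)⟩, ?_⟩, ?_⟩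
  · intro x y hxy
    have h2 : (f x : ℤ) = f y := congrArg (fun z : ↥X => (z : ℤ)) hxy
    exact f.injective (Subtype.ext h2)
  · ext x; rfl

theorem FIModule.map_map (A : FIModule) {S T U : Finset ℤ} (f : ↥S ↪ ↥T) (g : ↥T ↪ ↥U)
    (x : A.obj S) : A.map g (A.map f x) = A.map (f.trans g) x := by
  rw [A.map_comp]; rfl

namespace FreeStructure
variable {A : FIModule} (fs : FreeStructure A)

/-- The components of an element of a free FI-module along the summands `c T Q`. -/
noncomputable def comp (T : Finset ℤ) : A.obj T →+ (Finset ℤ → A.obj T) :=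
  (exists_components (fs.c T) (fs.indep T) (fs.total T)).choose

theorem comp_mem (T : Finset ℤ) (x : A.obj T) (Q : Finset ℤ) : fs.comp T x Q ∈ fs.c T Q :=
  (exists_components (fs.c T) (fs.indep T) (fs.total T)).choose_spec.1 x Q

theorem comp_of_mem {T Q : Finset ℤ} {x : A.obj T} (hx : x ∈ fs.c T Q) :
    fs.comp T x = Pi.single Q x :=
  (exists_components (fs.c T) (fs.indep T) (fs.total T)).choose_spec.2.1 Q x hx

theorem mem_of_comp {T : Finset ℤ} {x : A.obj T} (P : Finset ℤ → Prop)
    (h : ∀ Q, ¬ P Q → fs.comp T x Q = 0) : x ∈ ⨆ Q, ⨆ _ : P Q, fs.c T Q :=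
  (exists_components (fs.c T) (fs.indep T) (fs.total T)).choose_spec.2.2 P x h

theorem comp_injective (T : Finset ℤ) : Function.Injective (fs.comp T) := by
  rw [injective_iff_map_eq_zero]
  intro x hx
  simpa using fs.mem_of_comp (x := x) (fun _ => False) fun Q _ => by rw [hx]; rfl

theorem comp_eq_zero {T Q : Finset ℤ} (h : ¬ Q ⊆ T) (x : A.obj T) : fs.comp T x Q = 0 := by
  have := fs.comp_mem T x Q
  rwa [fs.eq_bot_of_not_subset T Q h, AddSubgroup.mem_bot] at this

theorem induction_c {T : Finset ℤ} {p : A.obj T → Prop} (x : A.obj T)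
    (h : ∀ Q, Q ⊆ T → ∀ x ∈ fs.c T Q, p x) (h0 : p 0) (hadd : ∀ x y, p x → p y → p (x + y)) :
    p x := by
  have hx : x ∈ ⨆ Q, fs.c T Q := by rw [fs.total]; exact AddSubgroup.mem_top x
  refine AddSubgroup.iSup_induction (C := p) _ hx (fun Q x hx => ?_) h0 hadd
  by_cases hQ : Q ⊆ T
  · exact h Q hQ x hx
  · rw [fs.eq_bot_of_not_subset T Q hQ, AddSubgroup.mem_bot] at hx
    rw [hx]; exact h0

theorem map_mem_c {T T' : Finset ℤ} (f : ↥T ↪ ↥T') {S : Finset ℤ} (hS : S ⊆ T) {x : A.obj T}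
    (hx : x ∈ fs.c T S) : A.map f x ∈ fs.c T' (imgUnder f hS) := by
  rw [← fs.map_summand f S hS]; exact AddSubgroup.mem_map_of_mem _ hx

theorem comp_map {T T' : Finset ℤ} (f : ↥T ↪ ↥T') {S : Finset ℤ} (hS : S ⊆ T) (x : A.obj T) :
    fs.comp T' (A.map f x) (imgUnder f hS) = A.map f (fs.comp T x S) := by
  refine fs.induction_c (p := fun x =>
    fs.comp T' (A.map f x) (imgUnder f hS) = A.map f (fs.comp T x S)) x ?_ ?_ ?_
  · intro Q hQ x hx
    rw [fs.comp_of_mem hx, fs.comp_of_mem (fs.map_mem_c f hQ hx)]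
    by_cases h : S = Q
    · subst h; simp
    · rw [Pi.single_eq_of_ne h, Pi.single_eq_of_ne fun h2 => h (imgUnder_injective f _ _ h2),
        map_zero]
  · simp
  · intro x y hx hy
    simp only [map_add, Pi.add_apply] at *
    rw [hx, hy]

theorem exists_of_comp_map_ne_zero {T T' : Finset ℤ} (f : ↥T ↪ ↥T') (x : A.obj T)
    (Q' : Finset ℤ) (h : fs.comp T' (A.map f x) Q' ≠ 0) :
    ∃ S, ∃ hS : S ⊆ T, Q' = imgUnder f hS := by
  by_contra hcon
  apply h
  refine fs.induction_c (p := fun x => fs.comp T' (A.map f x) Q' = 0) x ?_ ?_ ?_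
  · intro Q hQ x hx
    rw [fs.comp_of_mem (fs.map_mem_c f hQ hx), Pi.single_eq_of_ne]
    exact fun h => hcon ⟨Q, hQ, h⟩
  · simp
  · intro x y hx hy
    simp only [map_add, Pi.add_apply] at *
    rw [hx, hy, add_zero]

theorem c_le_range {T T' : Finset ℤ} (h : T ⊆ T') {Q : Finset ℤ} (hQ : Q ⊆ T) :
    fs.c T' Q ≤ (A.map (inclEmb h)).range := by
  have := fs.map_summand (inclEmb h) Q hQ
  rw [imgUnder_inclEmb] at this
  rw [← this]
  rintro _ ⟨x, -, rfl⟩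
  exact ⟨x, rfl⟩

theorem subset_of_comp_incl {T T' : Finset ℤ} (h : T ⊆ T') (x : A.obj T) (Q : Finset ℤ)
    (hne : fs.comp T' (A.map (inclEmb h) x) Q ≠ 0) : Q ⊆ T := by
  obtain ⟨S, hS, rfl⟩ := fs.exists_of_comp_map_ne_zero _ _ _ hne
  rwa [imgUnder_inclEmb]

theorem card_le_of_comp_ne_zero {T : Finset ℤ} {m : ℕ} (x : A.obj T)
    (hx : x ∈ AddSubgroup.closure {y : A.obj T |
      ∃ (S : Finset ℤ) (f : ↥S ↪ ↥T) (v : A.obj S), S.card ≤ m ∧ y = A.map f v})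
    (Q : Finset ℤ) (h : fs.comp T x Q ≠ 0) : Q.card ≤ m := by
  by_contra hcon
  apply h
  induction hx using AddSubgroup.closure_induction with
  | mem x hx =>
    obtain ⟨S, f, v, hS, rfl⟩ := hx
    by_contra hne
    obtain ⟨S', hS', rfl⟩ := fs.exists_of_comp_map_ne_zero _ _ _ hne
    rw [imgUnder_card] at hcon
    exact hcon ((Finset.card_le_card hS').trans hS)
  | zero => simp
  | add x y _ _ hx hy =>
    rw [map_add, Pi.add_apply, not_not.1 fun h => h (by_contra fun h2 => h2 (hx h)),
      by_contra fun h2 => h2 (hy h2), add_zero]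
  | neg x _ hx => rw [map_neg, Pi.neg_apply, by_contra fun h2 => h2 (hx h2), neg_zero]

/-- The elements of `A_R` without components at the `Q ⊇ B`; this is the sum over `b ∈ B` of the
images of `A_{R ∖ {b}}`. -/
noncomputable def lower (R B : Finset ℤ) : AddSubgroup (A.obj R) :=
  ((projAbove B).comp (fs.comp R)).ker

theorem mem_lower {R B : Finset ℤ} {x : A.obj R} :
    x ∈ fs.lower R B ↔ ∀ Q, B ⊆ Q → fs.comp R x Q = 0 := projAbove_eq_zero

end FreeStructure

/-- The image of `W_S` in `A_R` under the inclusion `S ⊆ R`, or zero when `S` is not a subset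
of `R`. -/
def FIModule.img (A : FIModule) (W : ∀ T : Finset ℤ, AddSubgroup (A.obj T)) (R S : Finset ℤ) :
    AddSubgroup (A.obj R) :=
  ⨆ h : S ⊆ R, (W S).map (A.map (inclEmb h))

theorem FIModule.img_eq (A : FIModule) (W : ∀ T : Finset ℤ, AddSubgroup (A.obj T))
    {R S : Finset ℤ} (h : S ⊆ R) : A.img W R S = (W S).map (A.map (inclEmb h)) := by
  simp [FIModule.img, h]

theorem FIModule.img_mono (A : FIModule) (W : ∀ T : Finset ℤ, AddSubgroup (A.obj T))
    (hW : ∀ {S T : Finset ℤ} (f : ↥S ↪ ↥T) (x : A.obj S), x ∈ W S → A.map f x ∈ W T)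
    {R S T : Finset ℤ} (hST : S ⊆ T) (hT : T ⊆ R) : A.img W R S ≤ A.img W R T := by
  rw [A.img_eq W hT, A.img_eq W (hST.trans hT)]
  rintro _ ⟨x, hx, rfl⟩
  exact ⟨A.map (inclEmb hST) x, hW _ _ hx, A.map_map _ _ _⟩

/-- The family `W` satisfies `W_T ∩ A^B_T ⊆ Σ_{b ∈ B} W_{T ∖ {b}}` for all `B ⊆ T` with `|T| > N`,
where `A^B_T` consists of the elements without components at the `Q ⊇ B` and all subgroups are
taken inside `A_R` for an ambient `R ⊇ T`. -/
def SplitAbove {A : FIModule} (fs : FreeStructure A) (W : ∀ T : Finset ℤ, AddSubgroup (A.obj T))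
    (N : ℕ) : Prop :=
  ∀ R T : Finset ℤ, T ⊆ R → N < T.card → ∀ B ⊆ T,
    A.img W R T ⊓ fs.lower R B ≤ ⨆ b ∈ B, A.img W R (T.erase b)

/-! ### The splitting property of submodules and kernels -/

namespace FreeStructure
variable {A : FIModule} (fs : FreeStructure A)

theorem mem_closure_of_famGenLE {W : ∀ T : Finset ℤ, AddSubgroup (A.obj T)} {d : ℕ}
    (hW : FamGenLE A W d) {S R : Finset ℤ} (h : S ⊆ R) {x : A.obj S} (hx : x ∈ W S) :
    A.map (inclEmb h) x ∈ AddSubgroup.closure {y : A.obj R |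
      ∃ (S : Finset ℤ) (f : ↥S ↪ ↥R) (v : A.obj S), S.card ≤ d ∧ y = A.map f v} := by
  have h1 := AddSubgroup.mem_map_of_mem (A.map (inclEmb h)) (hW S hx)
  rw [AddMonoidHom.map_closure] at h1
  refine AddSubgroup.closure_mono ?_ h1
  rintro _ ⟨_, ⟨X, f, v, hX, -, rfl⟩, rfl⟩
  exact ⟨X, f.trans (inclEmb h), v, hX, A.map_map _ _ _⟩

/-- A submodule of a free FI-module generated in degree `≤ d`, restricted to the subsets of `R`
and written in components. -/
noncomputable def compFamily (k d : ℕ) (hA : A.GenLE k)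
    (W : ∀ T : Finset ℤ, AddSubgroup (A.obj T))
    (hW : ∀ {S T : Finset ℤ} (f : ↥S ↪ ↥T) (x : A.obj S), x ∈ W S → A.map f x ∈ W T)
    (hd : FamGenLE A W d) (R : Finset ℤ) : CompFamily (A.obj R) R (min k d) d where
  V S := (A.img W R S).map (fs.comp R)
  mono S T hST hT := AddSubgroup.map_mono (A.img_mono W hW hST hT)
  supp := by
    rintro S hS _ ⟨y, hy, rfl⟩ Q hQ
    rw [A.img_eq W hS] at hy
    obtain ⟨z, hz, rfl⟩ := hy
    refine ⟨fs.subset_of_comp_incl hS z Q hQ, le_min ?_ ?_⟩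
    · exact fs.card_le_of_comp_ne_zero _ (hA R _) Q hQ
    · exact fs.card_le_of_comp_ne_zero _ (mem_closure_of_famGenLE hd hS hz) Q hQ
  gen := by
    intro S hS
    simp only [← AddSubgroup.map_iSup]
    refine AddSubgroup.map_mono ?_
    rw [A.img_eq W hS, AddSubgroup.map_le_iff_le_comap]
    refine (hd S).trans ((AddSubgroup.closure_le _).2 ?_)
    rintro _ ⟨X, f, v, hX, hv, rfl⟩
    have hXS := imgUnder_subset f (subset_refl X)
    obtain ⟨g, hg⟩ := exists_factor f _ hXS subset_rfl
    refine AddSubgroup.mem_iSup_of_mem (imgUnder f (subset_refl X))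
      (AddSubgroup.mem_iSup_of_mem ⟨hXS, by rwa [imgUnder_card]⟩ ?_)
    rw [A.img_eq W (hXS.trans hS)]
    refine ⟨A.map g v, hW _ _ hv, ?_⟩
    rw [A.map_map, A.map_map]
    conv_rhs => rw [hg]
    rfl
  swap := by
    rintro S hS a ha b hb _ ⟨y, hy, rfl⟩
    rw [A.img_eq W hS] at hy
    obtain ⟨z, hz, rfl⟩ := hy
    have hsw : ∀ x ∈ R, Equiv.swap a b x ∈ R := by
      intro x hx
      rw [Equiv.swap_apply_def]; split_ifs <;> assumption
    let σ : ↥R ↪ ↥R := ⟨fun x => ⟨Equiv.swap a b x, hsw x x.2⟩, fun x y h =>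
      Subtype.ext ((Equiv.swap a b).injective (congrArg Subtype.val h))⟩
    have hσ : ∀ {Q : Finset ℤ} (hQ : Q ⊆ R), imgUnder σ hQ = Q.image (Equiv.swap a b) := by
      intro Q hQ
      ext z; rw [mem_imgUnder, Finset.mem_image]
      exact ⟨fun ⟨x, hx, h⟩ => ⟨x, hx, h⟩, fun ⟨x, hx, h⟩ => ⟨x, hx, h⟩⟩
    have hSR : S.image (Equiv.swap a b) ⊆ R := by
      rw [← hσ hS]; exact imgUnder_subset σ hS
    refine ⟨fs.comp R (A.map σ (A.map (inclEmb hS) z)), AddSubgroup.mem_map_of_mem _ ?_, ?_, ?_⟩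
    · obtain ⟨g, hg⟩ := exists_factor ((inclEmb hS).trans σ) _ hSR (by
        intro w hw
        rw [mem_imgUnder] at hw
        obtain ⟨x, hx, rfl⟩ := hw
        exact Finset.mem_image.2 ⟨x, hx, rfl⟩)
      rw [A.img_eq W hSR, A.map_map, hg]
      exact ⟨A.map g z, hW _ _ hz, A.map_map _ _ _⟩
    · intro Q haQ hbQ
      by_cases hQ : Q ⊆ R
      swap
      · rw [fs.comp_eq_zero hQ, fs.comp_eq_zero hQ]
      have hfix : ∀ x ∈ Q, Equiv.swap a b x = x := fun x hx =>
        Equiv.swap_apply_of_ne_of_ne (fun h => haQ (h ▸ hx)) (fun h => hbQ (h ▸ hx))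
      have hQσ : imgUnder σ hQ = Q := by
        rw [hσ hQ, Finset.image_congr (g := id) hfix, Finset.image_id]
      have h1 := fs.comp_map σ hQ (A.map (inclEmb hS) z)
      rw [hQσ] at h1
      rw [h1]
      obtain ⟨w, hw⟩ := fs.c_le_range hQ (subset_refl Q)
        (fs.comp_mem R (A.map (inclEmb hS) z) Q)
      rw [← hw, A.map_map]
      congr 2
      ext x
      exact hfix x x.2
    · intro Q h0
      by_cases hQ : Q ⊆ R
      swap
      · exact fs.comp_eq_zero hQ _
      have hQ' : Q.image (Equiv.swap a b) ⊆ R := by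
        rw [← hσ hQ]; exact imgUnder_subset σ hQ
      have h1 := fs.comp_map σ hQ' (A.map (inclEmb hS) z)
      rw [hσ hQ', h0, map_zero, Finset.image_image] at h1
      simpa [Function.comp_def] using h1

theorem splitAbove_of_famGenLE (k d : ℕ) (hA : A.GenLE k)
    (W : ∀ T : Finset ℤ, AddSubgroup (A.obj T))
    (hW : ∀ {S T : Finset ℤ} (f : ↥S ↪ ↥T) (x : A.obj S), x ∈ W S → A.map f x ∈ W T)
    (hd : FamGenLE A W d) : SplitAbove fs W (min k d + d) := by
  intro R T hT hN B hB x hx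
  obtain ⟨hx1, hx2⟩ := AddSubgroup.mem_inf.1 hx
  have h := (fs.compFamily k d hA W hW hd R).inter_le (min_le_right _ _) T hT hN B hB
    (fs.comp R x) (AddSubgroup.mem_map_of_mem _ hx1) (fs.mem_lower.1 hx2)
  change fs.comp R x ∈ ⨆ b ∈ B, (A.img W R (T.erase b)).map (fs.comp R) at h
  simp only [← AddSubgroup.map_iSup] at h
  obtain ⟨y, hy, hyx⟩ := h
  exact fs.comp_injective R hyx ▸ hy

theorem mem_img_top {R T : Finset ℤ} (hT : T ⊆ R) {x : A.obj R}
    (h : ∀ Q, fs.comp R x Q ≠ 0 → Q ⊆ T) : x ∈ A.img (fun _ => ⊤) R T := by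
  rw [A.img_eq _ hT]
  have h1 := fs.mem_of_comp (x := x) (fun Q => Q ⊆ T) fun Q hQ => by_contra fun hne => hQ (h Q hne)
  refine (iSup₂_le fun Q hQ => ?_ : (⨆ Q, ⨆ _ : Q ⊆ T, fs.c R Q) ≤ _) h1
  exact (fs.c_le_range hT hQ).trans_eq (AddMonoidHom.range_eq_map _)

theorem img_top_inf_lower_le {R T B : Finset ℤ} (hT : T ⊆ R) :
    A.img (fun _ => ⊤) R T ⊓ fs.lower R B ≤
      ⨆ b ∈ B, A.img (fun _ => ⊤) R (T.erase b) := by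
  intro x hx
  obtain ⟨hx1, hx2⟩ := AddSubgroup.mem_inf.1 hx
  rw [A.img_eq _ hT] at hx1
  obtain ⟨z, -, rfl⟩ := hx1
  have h1 := fs.mem_of_comp (x := A.map (inclEmb hT) z) (fun Q => Q ⊆ T ∧ ¬ B ⊆ Q) fun Q hQ => by
    by_contra hne
    exact hQ ⟨fs.subset_of_comp_incl hT z Q hne, fun hB => hne (fs.mem_lower.1 hx2 Q hB)⟩
  refine (iSup₂_le ?_ : (⨆ Q, ⨆ _ : Q ⊆ T ∧ ¬ B ⊆ Q, fs.c R Q) ≤ _) h1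
  rintro Q ⟨hQT, hBQ⟩
  obtain ⟨b, hb, hbQ⟩ := Finset.not_subset.1 hBQ
  have hQb : Q ⊆ T.erase b := fun q hq =>
    Finset.mem_erase.2 ⟨fun h => hbQ (h ▸ hq), hQT hq⟩
  refine le_trans ?_ (le_iSup₂ (f := fun b (_ : b ∈ B) => A.img (fun _ => ⊤) R (T.erase b)) b hb)
  have hTR := (Finset.erase_subset b T).trans hT
  rw [A.img_eq _ hTR]
  exact (fs.c_le_range hTR hQb).trans_eq (AddMonoidHom.range_eq_map _)

end FreeStructure

theorem FIHom.app_map {A B : FIModule} (δ : FIHom B A) {S T : Finset ℤ} (f : ↥S ↪ ↥T)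
    (x : B.obj S) : δ.app T (B.map f x) = A.map f (δ.app S x) :=
  DFunLike.congr_fun (δ.natural f) x

/-- Passing from the image of a map of free FI-modules to its kernel raises the bound by one. -/
theorem SplitAbove.ker {A B : FIModule} {fsA : FreeStructure A} (fsB : FreeStructure B)
    (δ : FIHom B A) {N : ℕ} (h : SplitAbove fsA (fun T => (δ.app T).range) N) :
    SplitAbove fsB (fun T => (δ.app T).ker) (N + 1) := by
  intro R T hT hN C hC
  have hmap : ∀ T ⊆ R, (B.img (fun _ => ⊤) R T).map (δ.app R) =
      A.img (fun T => (δ.app T).range) R T := by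
    intro T hT
    rw [B.img_eq _ hT, A.img_eq _ hT, AddSubgroup.map_map, δ.natural, ← AddSubgroup.map_map,
      ← AddMonoidHom.range_eq_map]
  have hker : ∀ T ⊆ R, B.img (fun _ => ⊤) R T ⊓ (δ.app R).ker =
      B.img (fun T => (δ.app T).ker) R T := by
    intro T hT
    rw [B.img_eq _ hT, B.img_eq _ hT]
    ext x
    rw [AddSubgroup.mem_inf]
    constructor
    · rintro ⟨⟨z, -, rfl⟩, hz⟩
      refine AddSubgroup.mem_map_of_mem _ ?_
      rw [AddMonoidHom.mem_ker, δ.app_map] at hz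
      exact fsA.inj (inclEmb hT) (by rw [hz, map_zero])
    · rintro ⟨z, hz, rfl⟩
      refine ⟨AddSubgroup.mem_map_of_mem _ (AddSubgroup.mem_top z), ?_⟩
      rw [AddMonoidHom.mem_ker, δ.app_map, AddMonoidHom.mem_ker.1 hz, map_zero]
  have her : ∀ b, T.erase b ⊆ R := fun b => (Finset.erase_subset b T).trans hT
  have key := syzygy_step (δ.app R) R (B.img (fun _ => ⊤) R)
    (fun S T hST hT => B.img_mono _ (fun _ _ _ => AddSubgroup.mem_top _) hST hT)
    (fsA.lower R) N (by
      intro T hT C b hbC hbT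
      have her := (Finset.erase_subset b T).trans hT
      rw [hmap _ her, A.img_eq _ her]
      rintro _ ⟨z, -, rfl⟩
      rw [fsA.mem_lower]
      intro Q hQ
      by_contra hne
      exact Finset.notMem_erase b T (fsA.subset_of_comp_incl her z Q hne (hQ hbC)))
    (by
      intro T hT hN C hC
      rw [hmap T hT]
      refine (h R T hT hN C hC).trans (iSup₂_mono fun b _ => ?_)
      rw [hmap _ ((Finset.erase_subset b T).trans hT)])
    T hT hN C hC
  rw [← hker T hT]
  have h2 : (B.img (fun _ => ⊤) R T ⊓ (δ.app R).ker) ⊓ fsB.lower R C ≤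
      (B.img (fun _ => ⊤) R T ⊓ (δ.app R).ker) ⊓
        ⨆ b ∈ C, B.img (fun _ => ⊤) R (T.erase b) :=
    le_inf inf_le_left (le_trans (inf_le_inf_right _ inf_le_left) (fsB.img_top_inf_lower_le hT))
  refine (h2.trans key).trans (iSup₂_mono fun b _ => ?_)
  rw [hker _ (her b)]

/-- In degrees above that of the generators of the ambient module the components at `Q ⊇ T`
vanish in `A_T`, so that the splitting property with `B = T` bounds the degree of generators. -/
theorem SplitAbove.famGenLE {A : FIModule} {fs : FreeStructure A}
    {W : ∀ T : Finset ℤ, AddSubgroup (A.obj T)} {N m : ℕ} (h : SplitAbove fs W N)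
    (hA : A.GenLE m) (hm : m ≤ N) : FamGenLE A W N := by
  intro T
  induction hn : T.card using Nat.strong_induction_on generalizing T with
  | _ n ih =>
  subst hn
  by_cases hT : T.card ≤ N
  · intro x hx
    exact AddSubgroup.subset_closure
      ⟨T, Function.Embedding.refl _, x, hT, hx, by rw [A.map_id]; rfl⟩
  push Not at hT
  intro x hx
  have h1 : x ∈ A.img W T T := by
    rw [A.img_eq W (subset_refl T)]
    refine ⟨x, hx, ?_⟩
    change A.map (Function.Embedding.refl _) x = x
    rw [A.map_id]; rfl
  have h2 : x ∈ fs.lower T T := by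
    rw [fs.mem_lower]
    intro Q hQ
    by_contra hne
    have h3 := fs.card_le_of_comp_ne_zero x (hA T x) Q hne
    have h4 := Finset.card_le_card hQ
    omega
  refine (iSup₂_le ?_ : (⨆ b ∈ T, A.img W T (T.erase b)) ≤ _)
    (h T T (subset_refl T) hT T (subset_refl T) (AddSubgroup.mem_inf.2 ⟨h1, h2⟩))
  intro b hb
  have hbT := Finset.erase_subset b T
  rw [A.img_eq W hbT, AddSubgroup.map_le_iff_le_comap]
  refine (ih _ (Finset.card_erase_lt_of_mem hb) _ rfl).trans ((AddSubgroup.closure_le _).2 ?_)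
  rintro _ ⟨S, f, v, hS, hv, rfl⟩
  exact AddSubgroup.subset_closure ⟨S, f.trans (inclEmb hbT), v, hS, hv, A.map_map _ _ _⟩

/-! ### Free covers -/

/-- Indices of a basis of the free cover at `T`: an injection `S → T` with `|S| ≤ m`, together
with an element of `K_S`. -/
def CoverIdx {A : FIModule} (K : ∀ T : Finset ℤ, AddSubgroup (A.obj T)) (m : ℕ)
    (T : Finset ℤ) : Type :=
  Σ S : {S : Finset ℤ // S.card ≤ m}, (↥S.1 ↪ ↥T) × K S.1

namespace CoverIdx
variable {A : FIModule} {K : ∀ T : Finset ℤ, AddSubgroup (A.obj T)} {m : ℕ}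

/-- Composition of the injection `S → T` with `g`. -/
def push {T T' : Finset ℤ} (g : ↥T ↪ ↥T') (i : CoverIdx K m T) : CoverIdx K m T' :=
  ⟨i.1, i.2.1.trans g, i.2.2⟩

/-- The image of the injection `S → T`, i.e. the summand `Q ⊆ T` to which the index belongs. -/
def rng {T : Finset ℤ} (i : CoverIdx K m T) : Finset ℤ := imgUnder i.2.1 (subset_refl _)

theorem rng_subset {T : Finset ℤ} (i : CoverIdx K m T) : i.rng ⊆ T := imgUnder_subset _ _

theorem rng_push {T T' : Finset ℤ} (g : ↥T ↪ ↥T') (i : CoverIdx K m T) :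
    (i.push g).rng = imgUnder g i.rng_subset := by
  ext z
  rw [mem_imgUnder, rng, mem_imgUnder]
  constructor
  · rintro ⟨x, hx, rfl⟩
    exact ⟨i.2.1 ⟨x, hx⟩, (mem_imgUnder _ _).2 ⟨x, hx, rfl⟩, rfl⟩
  · rintro ⟨y, hy, rfl⟩
    obtain ⟨x, hx, rfl⟩ := (mem_imgUnder _ _).1 hy
    exact ⟨x, hx, rfl⟩

theorem push_injective {T T' : Finset ℤ} (g : ↥T ↪ ↥T') :
    Function.Injective (push g : CoverIdx K m T → CoverIdx K m T') := by
  rintro ⟨S, f, v⟩ ⟨S', f', v'⟩ h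
  obtain ⟨h1, h2⟩ := Sigma.mk.inj h
  change S = S' at h1
  subst h1
  obtain ⟨h3, h4⟩ := Prod.mk.inj (eq_of_heq h2)
  change v = v' at h4
  have h5 : f = f' := by
    ext x
    have h6 : g (f x) = g (f' x) := DFunLike.congr_fun h3 x
    rw [g.injective h6]
  rw [h4, h5]

theorem image_push {T T' : Finset ℤ} (f : ↥T ↪ ↥T') (S : Finset ℤ) (hS : S ⊆ T) :
    push f '' {i : CoverIdx K m T | i.rng = S} = {i | i.rng = imgUnder f hS} := by
  ext j
  constructor
  · rintro ⟨i, rfl, rfl⟩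
    exact rng_push f i
  · intro hj
    change j.rng = _ at hj
    have h1 : ∀ x : ↥j.1.1, ∃ y : ↥T, f y = j.2.1 x := by
      intro x
      have h2 : (j.2.1 x : ℤ) ∈ imgUnder f hS := by
        rw [← hj]; exact (mem_imgUnder _ _).2 ⟨x, x.2, rfl⟩
      obtain ⟨y, hy, hyx⟩ := (mem_imgUnder _ _).1 h2
      exact ⟨⟨y, hS hy⟩, Subtype.ext hyx⟩
    choose g hg using h1
    have hginj : Function.Injective g := by
      intro x y hxy
      apply j.2.1.injective
      rw [← hg, ← hg, hxy]
    let i : CoverIdx K m T := ⟨j.1, ⟨g, hginj⟩, j.2.2⟩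
    have hij : push f i = j := by
      have : (⟨g, hginj⟩ : ↥j.1.1 ↪ ↥T).trans f = j.2.1 := by
        ext x; exact congrArg Subtype.val (hg x)
      change (⟨j.1, (⟨g, hginj⟩ : ↥j.1.1 ↪ ↥T).trans f, j.2.2⟩ : CoverIdx K m T') = j
      rw [this]; rfl
    refine ⟨i, ?_, hij⟩
    apply imgUnder_injective f i.rng_subset hS
    rw [← rng_push, hij, hj]

end CoverIdx

section Cover
variable {A : FIModule} (K : ∀ T : Finset ℤ, AddSubgroup (A.obj T)) (m : ℕ)

/-- The direct sum of copies of the free FI-modules on one generator of degree `|S|`, one copy for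
each `S` with `|S| ≤ m` and each element of `K_S`. -/
noncomputable def cover : FIModule where
  obj T := CoverIdx K m T →₀ ℤ
  map g := Finsupp.mapDomain.addMonoidHom (CoverIdx.push g)
  map_id T := by
    refine AddMonoidHom.ext fun x => ?_
    exact Finsupp.mapDomain_id (M := ℤ)
  map_comp f g := by
    refine AddMonoidHom.ext fun x => ?_
    exact Finsupp.mapDomain_comp (f := CoverIdx.push f) (g := CoverIdx.push g)

/-- The submodule of `cover K m` at `T` spanned by a set of indices. -/
noncomputable def cover.span {T : Finset ℤ} (s : Set (CoverIdx K m T)) :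
    AddSubgroup ((cover K m).obj T) :=
  (Finsupp.supported ℤ ℤ s).toAddSubgroup

/-- The element `n • e_i`, for the basis element `e_i` with index `i`. -/
noncomputable def cover.single {T : Finset ℤ} (i : CoverIdx K m T) (n : ℤ) : (cover K m).obj T :=
  (Finsupp.single i n : CoverIdx K m T →₀ ℤ)

theorem cover.induction {T : Finset ℤ} (H : AddSubgroup ((cover K m).obj T))
    (h : ∀ (i : CoverIdx K m T) (n : ℤ), cover.single K m i n ∈ H)
    (x : (cover K m).obj T) : x ∈ H := by
  change CoverIdx K m T →₀ ℤ at x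
  induction x using Finsupp.induction_linear with
  | zero => exact H.zero_mem
  | add f g hf hg => exact H.add_mem hf hg
  | single i n => exact h i n

/-- The summand at `Q` is spanned by the injections with image `Q`. -/
noncomputable def coverFree : FreeStructure (cover K m) where
  c T Q := cover.span K m {i : CoverIdx K m T | i.rng = Q}
  eq_bot_of_not_subset := by
    intro T S hS
    have : {i : CoverIdx K m T | i.rng = S} = ∅ := by
      ext i
      simp only [Set.mem_ofPred_eq, Set.mem_empty_iff_false, iff_false]
      rintro rfl
      exact hS i.rng_subset
    rw [this, cover.span, Finsupp.supported_empty]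
    rfl
  indep := by
    intro T Q
    rw [AddSubgroup.disjoint_def]
    intro x hx hx'
    have hle : (⨆ j, ⨆ (_ : j ≠ Q), cover.span K m {i : CoverIdx K m T | i.rng = j}) ≤
        cover.span K m {i : CoverIdx K m T | i.rng ≠ Q} := by
      refine iSup₂_le fun j hj y hy => ?_
      refine (Finsupp.supported_mono ?_ : Finsupp.supported ℤ ℤ _ ≤ Finsupp.supported ℤ ℤ _) hy
      rintro i rfl
      exact hj
    have h1 := hle hx'
    have hd := Finsupp.disjoint_supported_supported (M := ℤ) (R := ℤ)
      (s := {i : CoverIdx K m T | i.rng = Q}) (t := {i | i.rng ≠ Q}) (by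
        rw [Set.disjoint_left]
        intro i hi hi'
        exact hi' hi)
    exact Submodule.disjoint_def.1 hd x hx h1
  total := by
    intro T
    rw [eq_top_iff]
    intro x _
    refine cover.induction K m _ (fun i n => ?_) x
    refine AddSubgroup.mem_iSup_of_mem i.rng ?_
    exact Finsupp.single_mem_supported ℤ n rfl
  inj f := Finsupp.mapDomain_injective (CoverIdx.push_injective f)
  map_summand := by
    intro T T' f S hS
    rw [← CoverIdx.image_push f S hS]
    have h := Finsupp.lmapDomain_supported (M := ℤ) ℤ (CoverIdx.push f)
      {i : CoverIdx K m T | i.rng = S}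
    ext x
    refine Iff.trans ?_ (Iff.of_eq (congrArg (fun H : Submodule ℤ (CoverIdx K m T' →₀ ℤ) =>
      x ∈ H) h))
    rfl

theorem cover_genLE : (cover K m).GenLE m := by
  intro T x
  refine cover.induction K m _ (fun i n => ?_) x
  refine AddSubgroup.subset_closure ⟨i.1.1, i.2.1, cover.single K m
    (⟨i.1, Function.Embedding.refl _, i.2.2⟩ : CoverIdx K m i.1.1) n, i.1.2, ?_⟩
  exact (Finsupp.mapDomain_single (M := ℤ) (b := n)
    (a := (⟨i.1, Function.Embedding.refl _, i.2.2⟩ : CoverIdx K m i.1.1))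
    (f := CoverIdx.push i.2.1)).symm

/-- The canonical map from the cover to `A`. -/
noncomputable def coverHom : FIHom (cover K m) A where
  app T := Finsupp.liftAddHom fun i : CoverIdx K m T =>
    zmultiplesHom (A.obj T) (A.map i.2.1 i.2.2)
  natural {S T} f := by
    apply Finsupp.addHom_ext
    intro i n
    change Finsupp.liftAddHom (fun i : CoverIdx K m T =>
      zmultiplesHom (A.obj T) (A.map i.2.1 i.2.2))
        (Finsupp.mapDomain (CoverIdx.push f) (Finsupp.single i n)) =
      A.map f (Finsupp.liftAddHom (fun i : CoverIdx K m S =>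
        zmultiplesHom (A.obj S) (A.map i.2.1 i.2.2)) (Finsupp.single i n))
    rw [Finsupp.mapDomain_single, Finsupp.liftAddHom_apply_single,
      Finsupp.liftAddHom_apply_single, zmultiplesHom_apply, zmultiplesHom_apply, map_zsmul,
      A.map_map]
    rfl

theorem coverHom_single {T : Finset ℤ} (i : CoverIdx K m T) (n : ℤ) :
    (coverHom K m).app T (cover.single K m i n) =
      n • A.map i.2.1 i.2.2 := by
  change Finsupp.liftAddHom (fun i : CoverIdx K m T =>
      zmultiplesHom (A.obj T) (A.map i.2.1 i.2.2)) (Finsupp.single i n) = _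
  rw [Finsupp.liftAddHom_apply_single, zmultiplesHom_apply]

/-- The cover surjects onto any submodule `K` generated in degree `≤ m`. -/
theorem coverHom_range
    (hK : ∀ {S T : Finset ℤ} (f : ↥S ↪ ↥T) (x : A.obj S), x ∈ K S → A.map f x ∈ K T)
    (hm : FamGenLE A K m) (T : Finset ℤ) : ((coverHom K m).app T).range = K T := by
  apply le_antisymm
  · rintro _ ⟨x, rfl⟩
    refine cover.induction K m ((K T).comap ((coverHom K m).app T)) (fun i n => ?_) x
    rw [AddSubgroup.mem_comap, coverHom_single]
    exact zsmul_mem (hK _ _ i.2.2.2) n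
  · refine (hm T).trans ((AddSubgroup.closure_le _).2 ?_)
    rintro _ ⟨S, f, v, hS, hv, rfl⟩
    refine ⟨cover.single K m (⟨⟨S, hS⟩, f, ⟨v, hv⟩⟩ : CoverIdx K m T) 1, ?_⟩
    exact (coverHom_single K m _ 1).trans (one_zsmul _)

end Cover

theorem FIHom.map_mem_ker {A B : FIModule} (δ : FIHom B A) {S T : Finset ℤ} (f : ↥S ↪ ↥T)
    (x : B.obj S) (hx : x ∈ (δ.app S).ker) : B.map f x ∈ (δ.app T).ker := by
  rw [AddMonoidHom.mem_ker] at *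
  rw [δ.app_map, hx, map_zero]

theorem FIModule.GenLE.mono {A : FIModule} {m n : ℕ} (h : A.GenLE m) (hmn : m ≤ n) :
    A.GenLE n := fun T x =>
  AddSubgroup.closure_mono (by
    rintro _ ⟨S, f, v, hS, hy⟩
    exact ⟨S, f, v, hS.trans hmn, hy⟩) (h T x)

/-! ### Construction of the resolution -/

/-- The stage of the resolution at which `M_{p+1} → M_p` has been built: the image of this map has
the splitting property with bound `N`, and `M_{p+1}` is generated in degree `≤ N`. -/
structure Stage (N : ℕ) where
  A : FIModule
  B : FIModule
  fsA : FreeStructure A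
  fsB : FreeStructure B
  δ : FIHom B A
  gen : B.GenLE N
  split : SplitAbove fsA (fun T => (δ.app T).range) N

namespace Stage
variable {N : ℕ} (s : Stage N)

theorem famGenLE : FamGenLE s.B (fun T => (s.δ.app T).ker) (N + 1) :=
  (s.split.ker s.fsB s.δ).famGenLE s.gen (Nat.le_succ N)

theorem range_eq (T : Finset ℤ) :
    ((coverHom (fun T => (s.δ.app T).ker) (N + 1)).app T).range = (s.δ.app T).ker :=
  coverHom_range _ _ s.δ.map_mem_ker s.famGenLE T

/-- One more step of the resolution, covering the kernel of the last map. -/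
noncomputable def next : Stage (N + 1) where
  A := s.B
  B := cover (fun T => (s.δ.app T).ker) (N + 1)
  fsA := s.fsB
  fsB := coverFree _ _
  δ := coverHom _ _
  gen := cover_genLE _ _
  split := by
    simp only [s.range_eq]
    exact s.split.ker s.fsB s.δ

/-- The stages of the resolution starting from `s`. -/
noncomputable def iter : ∀ p : ℕ, Stage (N + p)
  | 0 => s
  | p + 1 => (iter p).next

end Stage

/-- **Bounded-degree free resolutions** (Church–Ellenberg, proof of Theorem A). Let `W`
be an FI-module admitting a short exact sequence `0 → V → M₀ → W → 0` with `M₀` a free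
FI-module generated in degree ≤ k and `V` generated in degree ≤ d.  Then `W` admits a
resolution `⋯ → M_p → M_{p−1} → ⋯ → M_0 → W → 0` by free FI-modules in which `M_0` is
generated in degree ≤ k and, for every `p ≥ 1`, `M_p` is generated in degree
≤ min(k,d) + d − 1 + p. -/
theorem exists_bounded_free_resolution (W M : FIModule) (k d : ℕ)
    (hfree : FreeStructure M) (hMgen : M.GenLE k)
    (φ : FIHom M W) (hsurj : ∀ T : Finset ℤ, Function.Surjective (φ.app T))
    (hker : FamGenLE M (fun T => (φ.app T).ker) d) :
    ∃ (Ms : ℕ → FIModule) (_ : ∀ p : ℕ, FreeStructure (Ms p))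
      (dmap : ∀ p : ℕ, FIHom (Ms (p + 1)) (Ms p)) (ε : FIHom (Ms 0) W),
      (∀ T : Finset ℤ, Function.Surjective (ε.app T)) ∧
      (∀ T : Finset ℤ, (ε.app T).ker = ((dmap 0).app T).range) ∧
      (∀ (p : ℕ) (T : Finset ℤ),
        ((dmap p).app T).ker = ((dmap (p + 1)).app T).range) ∧
      (Ms 0).GenLE k ∧
      (∀ p : ℕ, 1 ≤ p → (Ms p).GenLE (min k d + d + p - 1)) := by
  let N := min k d + d
  have hsub : ∀ {S T : Finset ℤ} (f : ↥S ↪ ↥T) (x : M.obj S), x ∈ (φ.app S).ker →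
    M.map f x ∈ (φ.app T).ker := φ.map_mem_ker
  have hrange : ∀ T, ((coverHom (fun T => (φ.app T).ker) d).app T).range = (φ.app T).ker :=
    coverHom_range _ _ hsub hker
  let s : Stage N :=
    { A := M
      B := cover (fun T => (φ.app T).ker) d
      fsA := hfree
      fsB := coverFree _ _
      δ := coverHom _ _
      gen := (cover_genLE _ _).mono (Nat.le_add_left _ _)
      split := by
        simp only [hrange]
        exact hfree.splitAbove_of_famGenLE k d hMgen _ hsub hker }
  refine ⟨fun p => (s.iter p).A, fun p => (s.iter p).fsA, fun p => (s.iter p).δ, φ, hsurj,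
    fun T => (hrange T).symm, fun p T => ((s.iter p).range_eq T).symm, hMgen, ?_⟩
  rintro (_ | p) hp
  · omega
  · exact (s.iter p).gen
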